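/- If x, z, w ∈ σᵢ(D) and dᵢ(x,z) < r(x), then dᵢ(x,z) + dᵢ(z,w) ≥ dᵢ(x,w). -/

import Mathlib

noncomputable section

open Set
open scoped ENNReal

/-- The Euclidean plane `ℝ²` with the Euclidean metric. -/
abbrev E2 : Type := EuclideanSpace ℝ (Fin 2)

/-- Vertices of the fixed closed regular (equilateral) triangle of side length 1. -/
def p0 : E2 := !₂[0, 0]
def p1 : E2 := !₂[1, 0]
def p2 : E2 := !₂[1 / 2, Real.sqrt 3 / 2]

/-- `Dtri` is the fixed closed regular triangle in `ℝ²` with edge length 1. -/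
def Dtri : Set E2 := convexHull ℝ {p0, p1, p2}

/-- `V0` is the set of the three vertices of `Dtri`. -/
def V0 : Set E2 := {p0, p1, p2}

/-- The three closed edges of `Dtri`. -/
def e01 : Set E2 := segment ℝ p0 p1
def e12 : Set E2 := segment ℝ p1 p2
def e02 : Set E2 := segment ℝ p0 p2

/-- `E0` is the set of the three closed edges of `Dtri`. -/
def E0 : Set (Set E2) := {e01, e12, e02}

/-- The open edge `e° = e ∖ V₀`. -/
def eo (e : Set E2) : Set E2 := e \ V0

/-- `Do = D°` is the interior of `Dtri` in `ℝ²`. -/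
def Do : Set E2 := interior Dtri

/-- `l : E₀ → ℝ` is positive and satisfies the strict triangle inequalities:
`l e₁ + l e₂ > l e₃` whenever `{e₁, e₂, e₃} = E₀`. -/
def TriIneq (l : Set E2 → ℝ) : Prop :=
  (∀ e ∈ E0, 0 < l e) ∧
  ∀ e₁ e₂ e₃ : Set E2, ({e₁, e₂, e₃} : Set (Set E2)) = E0 → l e₁ + l e₂ > l e₃

/-- A linear map `f : ℝ² → ℝ²` realizes the edge lengths `l`, i.e. for each `e ∈ E₀`
the segment `f(e)` has Euclidean length `l e`. -/
def Realizes (f : E2 →ₗ[ℝ] E2) (l : Set E2 → ℝ) : Prop :=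
  dist (f p0) (f p1) = l e01 ∧ dist (f p1) (f p2) = l e12 ∧ dist (f p0) (f p2) = l e02

/-- The metric `d[l]` on `Dtri`, defined by `d[l](x,y) = |f x - f y|₂` for a linear map `f`
realizing the edge lengths `l` (this is independent of the choice of `f`). -/
def dD (l : Set E2 → ℝ) (x y : E2) : ℝ :=
  letI := Classical.propDecidable (∃ f : E2 →ₗ[ℝ] E2, Realizes f l)
  if h : ∃ f : E2 →ₗ[ℝ] E2, Realizes f l then dist (h.choose x) (h.choose y) else 0

/-- A triangulation `T = (σᵢ)_{i ∈ I}`, `I = Fin n`, of a topological space `S`: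
a finite family of continuous maps `σᵢ : Dtri → S` such that
(a) `σᵢ` is injective on each open edge, (b) `σᵢ` is injective on `D°`,
(c) `S` is the disjoint union of `⋃ᵢ σᵢ(V₀)`, the sets `σᵢ(D°)`, and the distinct sets
among the `σᵢ(e°)`, and (d) glued edges are identified by a linear homeomorphism. -/
structure Triangulation (S : Type) [TopologicalSpace S] (n : ℕ) where
  σ : Fin n → E2 → S
  continuousOn : ∀ i, ContinuousOn (σ i) Dtri
  inj_edge : ∀ i, ∀ e ∈ E0, InjOn (σ i) (eo e)
  inj_int : ∀ i, InjOn (σ i) Do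
  cover : (⋃ i, σ i '' V0) ∪ (⋃ i, σ i '' Do) ∪ (⋃ i, ⋃ e ∈ E0, σ i '' eo e) = univ
  disj_int : ∀ i j, i ≠ j → Disjoint (σ i '' Do) (σ j '' Do)
  disj_vert_int : ∀ j, Disjoint (⋃ i, σ i '' V0) (σ j '' Do)
  disj_vert_edge : ∀ j, ∀ e ∈ E0, Disjoint (⋃ i, σ i '' V0) (σ j '' eo e)
  disj_int_edge : ∀ i j, ∀ e ∈ E0, Disjoint (σ i '' Do) (σ j '' eo e)
  edge_eq_or_disjoint : ∀ i j, ∀ e ∈ E0, ∀ e' ∈ E0,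
    σ i '' eo e = σ j '' eo e' ∨ Disjoint (σ i '' eo e) (σ j '' eo e')
  glue : ∀ i j, ∀ e ∈ E0, ∀ e' ∈ E0, σ i '' eo e = σ j '' eo e' →
    ∃ A : E2 →ᵃ[ℝ] E2, A '' e = e' ∧ ∀ x ∈ e, σ j (A x) = σ i x

variable {S : Type} [TopologicalSpace S] {n : ℕ}

/-- `l ∈ ℝ^{E(T)}_Δ`: `l` assigns positive lengths to the edges of `T` satisfying the
strict triangle inequalities in each triangle. -/
def TriIneqT (T : Triangulation S n) (l : Set S → ℝ) : Prop :=
  (∀ (i : Fin n), ∀ e ∈ E0, 0 < l (T.σ i '' e)) ∧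
  ∀ (i : Fin n), ∀ e₁ e₂ e₃ : Set E2, ({e₁, e₂, e₃} : Set (Set E2)) = E0 →
    l (T.σ i '' e₁) + l (T.σ i '' e₂) > l (T.σ i '' e₃)

/-- The restricted edge lengths `l^{(i)}` on the triangle `σᵢ(D)`: `l^{(i)}_e = l_{σᵢ(e)}`. -/
def lRes (T : Triangulation S n) (l : Set S → ℝ) (i : Fin n) : Set E2 → ℝ :=
  fun e => l (T.σ i '' e)

/-- `dᵢ(x,y) = min { d[l^{(i)}](x',y') : x' ∈ σᵢ⁻¹(x), y' ∈ σᵢ⁻¹(y) }` for `x, y ∈ σᵢ(D)`. -/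
def dTri (T : Triangulation S n) (l : Set S → ℝ) (i : Fin n) (x y : S) : ℝ :=
  sInf { r | ∃ x' ∈ Dtri, ∃ y' ∈ Dtri,
    T.σ i x' = x ∧ T.σ i y' = y ∧ r = dD (lRes T l i) x' y' }

/-- The set of sums `Σ_j d_{i_j}(x_{j-1}, x_j)` over chains from `x` to `y`. -/
def chainSums (T : Triangulation S n) (l : Set S → ℝ) (x y : S) : Set ℝ :=
  { r | ∃ (k : ℕ) (c : ℕ → S) (idx : ℕ → Fin n),
      c 0 = x ∧ c k = y ∧
      (∀ j < k, c j ∈ T.σ (idx j) '' Dtri ∧ c (j + 1) ∈ T.σ (idx j) '' Dtri) ∧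
      r = ∑ j ∈ Finset.range k, dTri T l (idx j) (c j) (c (j + 1)) }

/-- The glued metric `d[l]` on `S`. -/
def dGlue (T : Triangulation S n) (l : Set S → ℝ) (x y : S) : ℝ :=
  sInf (chainSums T l x y)

/-- `K(x)`: the union of the edges of `Dtri` not containing `x`. -/
def Kset (x : E2) : Set E2 := ⋃₀ {e ∈ E0 | x ∉ e}

/-- The distance from `x` to `K(x)` in `(Dtri, d[l'])`. -/
def rObs (l' : Set E2 → ℝ) (x : E2) : ℝ := sInf { r | ∃ y ∈ Kset x, r = dD l' x y }

/-- `r(x) = min { rᵢ(x') : i ∈ I, x' ∈ σᵢ⁻¹(x) }` for `x ∈ S`. -/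
def rS (T : Triangulation S n) (l : Set S → ℝ) (x : S) : ℝ :=
  sInf { r | ∃ i : Fin n, ∃ x' ∈ Dtri, T.σ i x' = x ∧ r = rObs (lRes T l i) x' }

/-!
Choose lifts `x'`, `z'` with `dᵢ(x,z) = d[l⁽ⁱ⁾](x',z')` and `z''`, `w'` with
`dᵢ(z,w) = d[l⁽ⁱ⁾](z'',w')`. The triangle inequality upstairs applies once `z'` and `z''` agree,
so it suffices to move `x'` to a lift `x''` of `x` with `d[l⁽ⁱ⁾](x'',z'') = d[l⁽ⁱ⁾](x',z')`.
The condition `dᵢ(x,z) < r(x)` keeps `z'` off every edge not containing `x'`. If `z'` is interior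
then `z'' = z'`; if it is a vertex then `x' = z'`; and if it lies on an open edge then so does
`z''`, while `x'` lies on the same closed edge as `z'` and is carried along by the affine gluing
map, which preserves `d[l⁽ⁱ⁾]` because glued edges have the same length.
-/

section Affine

theorem diam_segment {F : Type*} [SeminormedAddCommGroup F] [NormedSpace ℝ F] (a b : F) :
    Metric.diam (segment ℝ a b) = dist a b := by
  rw [← convexHull_pair, convexHull_diam, Metric.diam_pair]

variable {E F G : Type*} [AddCommGroup E] [Module ℝ E]
  [SeminormedAddCommGroup F] [NormedSpace ℝ F] [SeminormedAddCommGroup G] [NormedSpace ℝ G]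

theorem dist_map_lineMap_lineMap (f : E →ᵃ[ℝ] F) (a b : E) (s t : ℝ) :
    dist (f (AffineMap.lineMap a b s)) (f (AffineMap.lineMap a b t)) =
      dist s t * Metric.diam (f '' segment ℝ a b) := by
  rw [image_segment, diam_segment, AffineMap.apply_lineMap, AffineMap.apply_lineMap,
    dist_lineMap_lineMap]

theorem dist_map_eq_of_diam_image_segment_eq {f : E →ᵃ[ℝ] F} {g : E →ᵃ[ℝ] G} {a b x y : E}
    (h : Metric.diam (f '' segment ℝ a b) = Metric.diam (g '' segment ℝ a b))
    (hx : x ∈ segment ℝ a b) (hy : y ∈ segment ℝ a b) :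
    dist (f x) (f y) = dist (g x) (g y) := by
  rw [segment_eq_image_lineMap] at hx hy
  obtain ⟨s, -, rfl⟩ := hx
  obtain ⟨t, -, rfl⟩ := hy
  rw [dist_map_lineMap_lineMap, dist_map_lineMap_lineMap, h]

end Affine

section AffineBasis

variable {ι 𝕜 E : Type*} [Field 𝕜] [LinearOrder 𝕜] [AddCommGroup E] [Module 𝕜 E]
  (b : AffineBasis ι 𝕜 E) {i : ι} {x : E}

theorem mem_convexHull_image_compl_of_coord_eq_zero [IsStrictOrderedRing 𝕜] [Finite ι]
    (hx : ∀ j, 0 ≤ b.coord j x) (hi : b.coord i x = 0) : x ∈ convexHull 𝕜 (b '' {i}ᶜ) := by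
  classical
  have := Fintype.ofFinite ι
  have hsum : ∑ j ∈ Finset.univ.erase i, b.coord j x = 1 := by
    rw [Finset.sum_erase (f := fun j ↦ b.coord j x) _ hi, b.sum_coord_apply_eq_one]
  have hcomb : ∑ j ∈ Finset.univ.erase i, b.coord j x • b j = x := by
    rw [Finset.sum_erase (f := fun j ↦ b.coord j x • b j) _ (by rw [hi, zero_smul]),
      b.linear_combination_coord_eq_self]
  rw [← hcomb]
  exact (convex_convexHull 𝕜 _).sum_mem (fun j _ ↦ hx j) hsum fun j hj ↦
    subset_convexHull 𝕜 _ (mem_image_of_mem b (Finset.ne_of_mem_erase hj))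

theorem coord_eq_zero_of_mem_convexHull_image_compl (hx : x ∈ convexHull 𝕜 (b '' {i}ᶜ)) :
    b.coord i x = 0 := by
  refine convexHull_min (t := b.coord i ⁻¹' {0}) ?_ ((convex_singleton 0).affine_preimage _) hx
  rintro _ ⟨j, hj, rfl⟩
  exact b.coord_apply_ne (Ne.symm hj)

theorem eq_of_forall_mem_convexHull_image_compl [Finite ι]
    (hx : ∀ j ≠ i, x ∈ convexHull 𝕜 (b '' {j}ᶜ)) : x = b i := by
  have := Fintype.ofFinite ι
  have hne : ∀ j ≠ i, b.coord j x = 0 := fun j hj ↦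
    coord_eq_zero_of_mem_convexHull_image_compl b (hx j hj)
  have hi : b.coord i x = 1 := by
    rw [← b.sum_coord_apply_eq_one x, Fintype.sum_eq_single i hne]
  refine b.ext_elem fun j ↦ ?_
  obtain rfl | hj := eq_or_ne j i
  · rw [hi, b.coord_apply_eq]
  · rw [hne j hj, b.coord_apply_ne hj]

end AffineBasis

theorem mem_interior_convexHull_or_mem_convexHull_image_compl {ι E : Type*} [Finite ι]
    [NormedAddCommGroup E] [NormedSpace ℝ E] (b : AffineBasis ι ℝ E) {x : E}
    (hx : x ∈ convexHull ℝ (range b)) :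
    x ∈ interior (convexHull ℝ (range b)) ∨ ∃ i, x ∈ convexHull ℝ (b '' {i}ᶜ) := by
  rw [b.interior_convexHull]
  rw [b.convexHull_eq_nonneg_coord] at hx
  refine or_iff_not_imp_left.2 fun hpos ↦ ?_
  obtain ⟨i, hi⟩ := not_forall.1 hpos
  exact ⟨i, mem_convexHull_image_compl_of_coord_eq_zero b hx (le_antisymm (not_lt.1 hi) (hx i))⟩

theorem exists_norm_eq_norm_eq_dist_eq {a b c : ℝ} (hab : c ≤ a + b) (hbc : a ≤ b + c)
    (hca : b ≤ c + a) : ∃ q r : E2, ‖q‖ = a ∧ ‖r‖ = c ∧ dist q r = b := by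
  have ha : 0 ≤ a := by linarith
  have hb : 0 ≤ b := by linarith
  have hc : 0 ≤ c := by linarith
  obtain ⟨t, ht, htc⟩ : ∃ t : ℝ, 2 * a * t = a ^ 2 + c ^ 2 - b ^ 2 ∧ t ^ 2 ≤ c ^ 2 := by
    rcases ha.eq_or_lt with rfl | ha
    · exact ⟨0, by nlinarith, by nlinarith⟩
    · refine ⟨(a ^ 2 + c ^ 2 - b ^ 2) / (2 * a), by field_simp, ?_⟩
      rw [div_pow, div_le_iff₀ (by positivity), ← mul_pow]
      refine sq_le_sq' ?_ ?_ <;> nlinarith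
  have hsqrt : √(c ^ 2 - t ^ 2) ^ 2 = c ^ 2 - t ^ 2 := Real.sq_sqrt (sub_nonneg.2 htc)
  refine ⟨!₂[a, 0], !₂[t, √(c ^ 2 - t ^ 2)], ?_, ?_, ?_⟩
  · simp [EuclideanSpace.norm_eq, ha]
  · simp [EuclideanSpace.norm_eq, hsqrt, hc]
  · have hsq : (a - t) ^ 2 + √(c ^ 2 - t ^ 2) ^ 2 = b ^ 2 := by linear_combination hsqrt - ht
    simp [EuclideanSpace.dist_eq, Real.dist_eq, hsq, hb]

section Triangle

theorem p0_eq_zero : p0 = 0 := by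
  ext i
  fin_cases i <;> rfl

theorem affineIndependent_vertices : AffineIndependent ℝ ![p0, p1, p2] := by
  rw [affineIndependent_iff_not_collinear_set, collinear_iff_of_mem (mem_insert p0 _)]
  rintro ⟨v, hv⟩
  obtain ⟨r, hr⟩ := hv p1 (by simp)
  obtain ⟨s, hs⟩ := hv p2 (by simp)
  have hr0 : 1 = r * v 0 := by simpa [p0, p1] using congrArg (· 0) hr
  have hr1 : r = 0 ∨ v 1 = 0 := by simpa [p0, p1] using congrArg (· 1) hr
  have hs1 : √3 / 2 = s * v 1 := by simpa [p0, p2] using congrArg (· 1) hs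
  rcases hr1 with h | h
  · simp [h] at hr0
  · simp [h] at hs1

/-- The vertices `p0`, `p1`, `p2` of `Dtri` as an affine basis of the plane, which gives access to
barycentric coordinates. -/
def vertexBasis : AffineBasis (Fin 3) ℝ E2 where
  toFun := ![p0, p1, p2]
  ind' := affineIndependent_vertices
  tot' := affineIndependent_vertices.affineSpan_eq_top_iff_card_eq_finrank_add_one.2 (by simp)

theorem coe_vertexBasis : ⇑vertexBasis = ![p0, p1, p2] := rfl

theorem range_vertexBasis : range vertexBasis = V0 := by
  rw [coe_vertexBasis, V0, Matrix.range_cons, Matrix.range_cons_cons_empty, singleton_union]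

theorem convexHull_range_vertexBasis : convexHull ℝ (range vertexBasis) = Dtri := by
  rw [range_vertexBasis, V0, Dtri]

theorem convexHull_vertexBasis_image_compl_mem_E0 (i : Fin 3) :
    convexHull ℝ (vertexBasis '' {i}ᶜ) ∈ E0 := by
  fin_cases i
  · have h : ({0}ᶜ : Set (Fin 3)) = {1, 2} := by ext j; fin_cases j <;> simp
    simp [h, image_pair, coe_vertexBasis, E0, e12]
  · have h : ({1}ᶜ : Set (Fin 3)) = {0, 2} := by ext j; fin_cases j <;> simp
    simp [h, image_pair, coe_vertexBasis, E0, e02]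
  · have h : ({2}ᶜ : Set (Fin 3)) = {0, 1} := by ext j; fin_cases j <;> simp
    simp [h, image_pair, coe_vertexBasis, E0, e01]

theorem Dtri_subset : Dtri ⊆ V0 ∪ Do ∪ ⋃ e ∈ E0, eo e := by
  intro x hx
  by_cases hxV : x ∈ V0
  · exact .inl (.inl hxV)
  rw [← convexHull_range_vertexBasis] at hx
  rcases mem_interior_convexHull_or_mem_convexHull_image_compl vertexBasis hx with hx | ⟨i, hx⟩
  · exact .inl (.inr (by rwa [convexHull_range_vertexBasis] at hx))
  · exact .inr (mem_biUnion (convexHull_vertexBasis_image_compl_mem_E0 i) ⟨hx, hxV⟩)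

theorem eq_of_mem_V0_of_forall_edge {v x : E2} (hv : v ∈ V0) (h : ∀ e ∈ E0, v ∈ e → x ∈ e) :
    x = v := by
  rw [← range_vertexBasis] at hv
  obtain ⟨i, rfl⟩ := hv
  exact eq_of_forall_mem_convexHull_image_compl vertexBasis fun j hj ↦
    h _ (convexHull_vertexBasis_image_compl_mem_E0 j)
      (subset_convexHull ℝ _ (mem_image_of_mem _ hj.symm))

theorem exists_eq_segment {e : Set E2} (he : e ∈ E0) : ∃ a b, e = segment ℝ a b := by
  rcases he with rfl | rfl | rfl
  exacts [⟨_, _, rfl⟩, ⟨_, _, rfl⟩, ⟨_, _, rfl⟩]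

theorem edge_subset_Dtri {e : Set E2} (he : e ∈ E0) : e ⊆ Dtri := by
  rcases he with rfl | rfl | rfl <;>
    exact (convex_convexHull ℝ _).segment_subset (subset_convexHull ℝ _ (by simp))
      (subset_convexHull ℝ _ (by simp))

end Triangle

section EdgeLengths

variable {l l' : Set E2 → ℝ}

theorem TriIneq.exists_realizes (h : TriIneq l) : ∃ f, Realizes f l := by
  obtain ⟨q, r, hq, hr, hqr⟩ := exists_norm_eq_norm_eq_dist_eq
    (h.2 e01 e12 e02 rfl).le
    (h.2 e12 e02 e01 (by rw [E0, pair_comm e02, insert_comm])).le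
    (h.2 e02 e01 e12 (by rw [E0, insert_comm, pair_comm e02])).le
  let f := (vertexBasis.basisOf 0).constr ℝ fun j ↦ ![0, q, r] j
  have hf (j : {j : Fin 3 // j ≠ 0}) : f (vertexBasis j) = ![0, q, r] j := by
    have h := (vertexBasis.basisOf 0).constr_basis ℝ (fun j ↦ ![0, q, r] j) j
    rwa [AffineBasis.basisOf_apply, show vertexBasis 0 = 0 from p0_eq_zero, vsub_eq_sub,
      sub_zero] at h
  have hf0 : f p0 = 0 := by rw [p0_eq_zero, map_zero]
  have hf1 : f p1 = q := hf ⟨1, by decide⟩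
  have hf2 : f p2 = r := hf ⟨2, by decide⟩
  refine ⟨f, ?_, ?_, ?_⟩
  · rw [hf0, hf1, dist_zero_left, hq]
  · rw [hf1, hf2, hqr]
  · rw [hf0, hf2, dist_zero_left, hr]

theorem Realizes.diam_image {f : E2 →ₗ[ℝ] E2} (h : Realizes f l) {e : Set E2} (he : e ∈ E0) :
    Metric.diam (f.toAffineMap '' e) = l e := by
  obtain ⟨h01, h12, h02⟩ := h
  rcases he with rfl | rfl | rfl
  · rwa [e01, image_segment, diam_segment]
  · rwa [e12, image_segment, diam_segment]
  · rwa [e02, image_segment, diam_segment]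

theorem exists_realizes_and_dD_eq_dist (h : ∃ f, Realizes f l) :
    ∃ f, Realizes f l ∧ ∀ x y, dD l x y = dist (f x) (f y) :=
  ⟨h.choose, h.choose_spec, fun _ _ ↦ dif_pos h⟩

variable (l) in
theorem exists_dD_eq_dist : ∃ f : E2 →ₗ[ℝ] E2, ∀ x y, dD l x y = dist (f x) (f y) := by
  by_cases h : ∃ f, Realizes f l
  · obtain ⟨f, -, hf⟩ := exists_realizes_and_dD_eq_dist h
    exact ⟨f, hf⟩
  · exact ⟨0, fun x y ↦ by simp [dD, h]⟩

theorem dD_nonneg (x y : E2) : 0 ≤ dD l x y := by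
  obtain ⟨f, hf⟩ := exists_dD_eq_dist l
  exact hf x y ▸ dist_nonneg

theorem dD_self (x : E2) : dD l x x = 0 := by
  obtain ⟨f, hf⟩ := exists_dD_eq_dist l
  rw [hf, dist_self]

theorem dD_triangle (x y z : E2) : dD l x z ≤ dD l x y + dD l y z := by
  obtain ⟨f, hf⟩ := exists_dD_eq_dist l
  simpa only [hf] using dist_triangle (f x) (f y) (f z)

theorem dD_map_of_image_edge_eq (hl : ∃ f, Realizes f l) (hl' : ∃ f, Realizes f l')
    {e e' : Set E2} (he : e ∈ E0) (he' : e' ∈ E0) (hee' : l' e' = l e) {A : E2 →ᵃ[ℝ] E2}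
    (hA : A '' e = e') {x z : E2} (hx : x ∈ e) (hz : z ∈ e) :
    dD l' (A x) (A z) = dD l x z := by
  obtain ⟨f, hf, hdf⟩ := exists_realizes_and_dD_eq_dist hl
  obtain ⟨g, hg, hdg⟩ := exists_realizes_and_dD_eq_dist hl'
  have hdiam : Metric.diam (g.toAffineMap.comp A '' e) = Metric.diam (f.toAffineMap '' e) := by
    rw [AffineMap.coe_comp, image_comp, hA, hg.diam_image he', hf.diam_image he, hee']
  obtain ⟨a, b, rfl⟩ := exists_eq_segment he
  rw [hdf, hdg]
  exact dist_map_eq_of_diam_image_segment_eq hdiam hx hz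

theorem rObs_nonneg (x : E2) : 0 ≤ rObs l x := by
  refine Real.sInf_nonneg ?_
  rintro _ ⟨y, -, rfl⟩
  exact dD_nonneg x y

theorem rObs_le_dD {x y : E2} (hy : y ∈ Kset x) : rObs l x ≤ dD l x y := by
  refine csInf_le ⟨0, ?_⟩ ⟨y, hy, rfl⟩
  rintro _ ⟨z, -, rfl⟩
  exact dD_nonneg x z

theorem mem_edge_of_dD_lt_rObs {x z : E2} (h : dD l x z < rObs l x) {e : Set E2} (he : e ∈ E0)
    (hz : z ∈ e) : x ∈ e := by
  by_contra hx
  exact h.not_ge (rObs_le_dD ⟨e, ⟨he, hx⟩, hz⟩)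

end EdgeLengths

theorem TriIneqT.triIneq_lRes {T : Triangulation S n} {l : Set S → ℝ} (h : TriIneqT T l)
    (i : Fin n) : TriIneq (lRes T l i) :=
  ⟨h.1 i, h.2 i⟩

namespace Triangulation

variable (T : Triangulation S n) (l : Set S → ℝ) {i j : Fin n} {x y : S}

/-- The preimage `σᵢ⁻¹(x)` of a point under a face of the triangulation. Since `T.σ i` is encoded
as a function on the whole plane, it is cut down to `Dtri`. -/
def fiber (i : Fin n) (x : S) : Set E2 := {x' ∈ Dtri | T.σ i x' = x}

variable {T} in
theorem fiber_nonempty (hx : x ∈ T.σ i '' Dtri) : (T.fiber i x).Nonempty := hx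

theorem fiber_finite (i : Fin n) (x : S) : (T.fiber i x).Finite := by
  have finite_of_injOn {s : Set E2} (hs : InjOn (T.σ i) s) : (s ∩ T.σ i ⁻¹' {x}).Finite :=
    .of_injOn (f := T.σ i) (fun _ hx' ↦ hx'.2) (hs.mono inter_subset_left) (finite_singleton x)
  have hV : V0.Finite := toFinite {p0, p1, p2}
  have hE : E0.Finite := toFinite {e01, e12, e02}
  refine ((hV.union (finite_of_injOn (T.inj_int i))).union
    (hE.biUnion fun e he ↦ finite_of_injOn (T.inj_edge i e he))).subset ?_
  rintro x' ⟨hx', hx⟩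
  rcases Dtri_subset hx' with (hx'V | hx'D) | hx'E
  · exact .inl (.inl hx'V)
  · exact .inl (.inr ⟨hx'D, hx⟩)
  · obtain ⟨e, he, hx'e⟩ := mem_iUnion₂.1 hx'E
    exact .inr (mem_biUnion he ⟨hx'e, hx⟩)

variable {T}

theorem eq_of_mem_fiber_of_mem_Do {z' z'' : E2} (hz' : z' ∈ Do)
    (hz'' : z'' ∈ T.fiber j (T.σ i z')) : j = i ∧ z'' = z' := by
  obtain ⟨hz''D, hzz⟩ := hz''
  rcases Dtri_subset hz''D with (hV | hD) | hE
  · exact (disjoint_left.1 (T.disj_vert_int i) (mem_iUnion_of_mem j ⟨z'', hV, hzz⟩)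
      ⟨z', hz', rfl⟩).elim
  · obtain rfl : j = i := by
      by_contra hji
      exact disjoint_left.1 (T.disj_int j i hji) ⟨z'', hD, hzz⟩ ⟨z', hz', rfl⟩
    exact ⟨rfl, T.inj_int j hD hz' hzz⟩
  · obtain ⟨e, he, hz''e⟩ := mem_iUnion₂.1 hE
    exact (disjoint_left.1 (T.disj_int_edge i j e he) ⟨z', hz', rfl⟩ ⟨z'', hz''e, hzz⟩).elim

theorem exists_mem_eo_of_mem_fiber {e : Set E2} (he : e ∈ E0) {z' z'' : E2} (hz' : z' ∈ eo e)
    (hz'' : z'' ∈ T.fiber j (T.σ i z')) : ∃ e' ∈ E0, z'' ∈ eo e' := by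
  obtain ⟨hz''D, hzz⟩ := hz''
  rcases Dtri_subset hz''D with (hV | hD) | hE
  · exact (disjoint_left.1 (T.disj_vert_edge i e he) (mem_iUnion_of_mem j ⟨z'', hV, hzz⟩)
      ⟨z', hz', rfl⟩).elim
  · exact (disjoint_left.1 (T.disj_int_edge j i e he) ⟨z'', hD, hzz⟩ ⟨z', hz', rfl⟩).elim
  · simpa only [mem_iUnion₂, exists_prop] using hE

theorem exists_gluing_of_mem_fiber {e : Set E2} (he : e ∈ E0) {z' z'' : E2} (hz' : z' ∈ eo e)
    (hz'' : z'' ∈ T.fiber j (T.σ i z')) :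
    ∃ A : E2 →ᵃ[ℝ] E2, A '' e ∈ E0 ∧ (∀ x' ∈ e, T.σ j (A x') = T.σ i x') ∧ A z' = z'' := by
  obtain ⟨e', he', hz''e'⟩ := exists_mem_eo_of_mem_fiber he hz' hz''
  have himage : T.σ i '' eo e = T.σ j '' eo e' :=
    (T.edge_eq_or_disjoint i j e he e' he').resolve_right fun hdisj ↦
      disjoint_left.1 hdisj ⟨z', hz', rfl⟩ ⟨z'', hz''e', hz''.2⟩
  obtain ⟨A, rfl, hσ⟩ := T.glue i j e he e' he' himage
  have hAz' : A z' ∉ V0 := fun hV ↦ disjoint_left.1 (T.disj_vert_edge i e he)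
    (mem_iUnion_of_mem j ⟨A z', hV, hσ z' hz'.1⟩) ⟨z', hz', rfl⟩
  refine ⟨A, he', hσ, T.inj_edge j _ he' ⟨mem_image_of_mem A hz'.1, hAz'⟩ hz''e' ?_⟩
  rw [hσ z' hz'.1, hz''.2]

theorem lRes_image_eq_of_gluing {e : Set E2} {A : E2 → E2}
    (hσ : ∀ x' ∈ e, T.σ j (A x') = T.σ i x') : lRes T l j (A '' e) = lRes T l i e := by
  rw [lRes, lRes, image_image, image_congr hσ]

variable {l}

theorem exists_mem_fiber_dD_eq (hi : ∃ f, Realizes f (lRes T l i))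
    (hj : ∃ f, Realizes f (lRes T l j)) {x' z' z'' : E2} (hx' : x' ∈ Dtri) (hz' : z' ∈ Dtri)
    (hz'' : z'' ∈ T.fiber j (T.σ i z')) (hxz : ∀ e ∈ E0, z' ∈ e → x' ∈ e) :
    ∃ x'' ∈ T.fiber j (T.σ i x'), dD (lRes T l j) x'' z'' = dD (lRes T l i) x' z' := by
  rcases Dtri_subset hz' with (hV | hD) | hE
  · obtain rfl := eq_of_mem_V0_of_forall_edge hV hxz
    exact ⟨z'', hz'', by rw [dD_self, dD_self]⟩
  · obtain ⟨rfl, rfl⟩ := eq_of_mem_fiber_of_mem_Do hD hz''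
    exact ⟨x', ⟨hx', rfl⟩, rfl⟩
  · obtain ⟨e, he, hz'e⟩ := mem_iUnion₂.1 hE
    obtain ⟨A, hAe, hσ, rfl⟩ := exists_gluing_of_mem_fiber he hz'e hz''
    have hx'e : x' ∈ e := hxz e he hz'e.1
    exact ⟨A x', ⟨edge_subset_Dtri hAe (mem_image_of_mem A hx'e), hσ x' hx'e⟩,
      dD_map_of_image_edge_eq hi hj he hAe (lRes_image_eq_of_gluing l hσ) rfl hx'e hz'e.1⟩

variable (T l)

theorem dTri_eq_sInf_image2 (i : Fin n) (x y : S) :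
    dTri T l i x y = sInf (image2 (dD (lRes T l i)) (T.fiber i x) (T.fiber i y)) := by
  rw [dTri]
  congr 1
  ext r
  constructor
  · rintro ⟨x', hx', y', hy', hx, hy, rfl⟩
    exact ⟨x', ⟨hx', hx⟩, y', ⟨hy', hy⟩, rfl⟩
  · rintro ⟨x', ⟨hx', hx⟩, y', ⟨hy', hy⟩, rfl⟩
    exact ⟨x', hx', y', hy', hx, hy, rfl⟩

variable {T}

theorem dTri_le_dD {x' y' : E2} (hx' : x' ∈ T.fiber i x) (hy' : y' ∈ T.fiber i y) :
    dTri T l i x y ≤ dD (lRes T l i) x' y' := by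
  rw [dTri_eq_sInf_image2]
  exact csInf_le (((T.fiber_finite i x).image2 _ (T.fiber_finite i y)).bddBelow)
    (mem_image2_of_mem hx' hy')

theorem exists_dD_eq_dTri (hx : x ∈ T.σ i '' Dtri) (hy : y ∈ T.σ i '' Dtri) :
    ∃ x' ∈ T.fiber i x, ∃ y' ∈ T.fiber i y, dD (lRes T l i) x' y' = dTri T l i x y := by
  rw [dTri_eq_sInf_image2]
  exact ((fiber_nonempty hx).image2 (fiber_nonempty hy)).csInf_mem
    ((T.fiber_finite i x).image2 _ (T.fiber_finite i y))

theorem rS_le_rObs {x' : E2} (hx' : x' ∈ T.fiber i x) : rS T l x ≤ rObs (lRes T l i) x' := by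
  refine csInf_le ⟨0, ?_⟩ ⟨i, x', hx'.1, hx'.2, rfl⟩
  rintro _ ⟨j, y', -, -, rfl⟩
  exact rObs_nonneg y'

end Triangulation

theorem dTri_triangle_of_lt_rS_general (T : Triangulation S n) (l : Set S → ℝ) (i : Fin n)
    (hl : ∃ f, Realizes f (lRes T l i)) (x z w : S) (hx : x ∈ T.σ i '' Dtri)
    (hz : z ∈ T.σ i '' Dtri) (hw : w ∈ T.σ i '' Dtri)
    (hlt : ∀ x' ∈ T.fiber i x, dTri T l i x z < rObs (lRes T l i) x') :
    dTri T l i x w ≤ dTri T l i x z + dTri T l i z w := by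
  obtain ⟨x', ⟨hx', rfl⟩, z', ⟨hz', rfl⟩, hxz⟩ := T.exists_dD_eq_dTri l hx hz
  obtain ⟨z'', hz'', w', hw', hzw⟩ := T.exists_dD_eq_dTri l hz hw
  have hedge : ∀ e ∈ E0, z' ∈ e → x' ∈ e := fun e he hz'e ↦
    mem_edge_of_dD_lt_rObs (hxz ▸ hlt x' ⟨hx', rfl⟩) he hz'e
  obtain ⟨x'', hx'', hxz''⟩ := T.exists_mem_fiber_dD_eq hl hl hx' hz' hz'' hedge
  calc dTri T l i (T.σ i x') w
      ≤ dD (lRes T l i) x'' w' := T.dTri_le_dD l hx'' hw'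
    _ ≤ dD (lRes T l i) x'' z'' + dD (lRes T l i) z'' w' := dD_triangle x'' z'' w'
    _ = dTri T l i (T.σ i x') (T.σ i z') + dTri T l i (T.σ i z') w := by rw [hxz'', hxz, hzw]

/-- if `x, z, w ∈ σᵢ(D)` and `dᵢ(x,z) < r(x)`, then
`dᵢ(x,z) + dᵢ(z,w) ≥ dᵢ(x,w)`. -/
theorem dTri_triangle_of_lt_rS
    {S : Type} [TopologicalSpace S] [CompactSpace S] [T2Space S] [ConnectedSpace S]
    {n : ℕ} (T : Triangulation S n) (l : Set S → ℝ) (hl : TriIneqT T l)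
    (i : Fin n) (x z w : S)
    (hx : x ∈ T.σ i '' Dtri) (hz : z ∈ T.σ i '' Dtri) (hw : w ∈ T.σ i '' Dtri)
    (hlt : dTri T l i x z < rS T l x) :
    dTri T l i x z + dTri T l i z w ≥ dTri T l i x w :=
  dTri_triangle_of_lt_rS_general T l i (hl.triIneq_lRes i).exists_realizes x z w hx hz hw
    fun _ hx' ↦ hlt.trans_le (Triangulation.rS_le_rObs l hx')
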